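/- Let $Z \sim N_p(0,\Sigma)$ with $\Sigma \in \mathcal{F}_\alpha$, and let $|\bar{C}^{(\tau)}_{ij}| \le 2$. Define $g = \sum_{1\le i,j\le p} \bar{C}^{(\tau)}_{ij}\big[(z_i^2 - \sigma_{ii})(z_j^2 - \sigma_{jj}) - 2\sigma_{ij}^2\big]$; note $\mathbb{E} g = 0$. Then for any even $K_0 \ge 2$ there exists $C$ such that $\mathbb{E}[g^{K_0}] \le C\, p^{K_0}$. -/

import Mathlib

open MeasureTheory ProbabilityTheory Finset

noncomputable section

/-- `Z` is a centered Gaussian vector with covariance matrix `S`. -/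
def IsGaussianVec {Ω : Type*} [MeasureSpace Ω] {p : ℕ}
    (Z : Ω → Fin p → ℝ) (S : Matrix (Fin p) (Fin p) ℝ) : Prop :=
  ∀ a : Fin p → ℝ,
    Measure.map (fun ω => ∑ i, a i * Z ω i) (ℙ : Measure Ω)
      = gaussianReal 0 (∑ i, ∑ j, a i * S i j * a j).toNNReal

/-!
A rotation of `E × E` preserves `μ.prod μ` when `μ` is a centered Gaussian measure. Interpolating
between `f x` and `f y` along the rotations by angles in `[0, π / 2]` bounds `f x - f y` by an
average of terms distributed as `(π / 2) * Df(x) y`. For fixed `x`, the variable `Df(x) y` is a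
centered Gaussian of standard deviation at most `σ ‖Df(x)‖`, which gives the `L^q` Poincaré
inequality `‖f - μ[f]‖_q ≤ (π / 2) σ γ_q ‖Df‖_q` with `γ_q` the `L^q` norm of a standard Gaussian.

Put `w i = z i ^ 2 - σ i i`. The `k`-th partial derivative of the quadratic form `∑ C i j w i w j`
is `2 z k` times a linear form in the `w j` with bounded coefficients, and the `k`-th partial
derivative of such a form is a bounded multiple of `z k`. Applying the Poincaré inequality to the
linear form and then to the quadratic form costs a factor `√p` each time, so `‖g‖_K ≤ c p`.
-/

open scoped ENNReal NNReal

section LpSeminorm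

variable {α β E : Type*} [MeasurableSpace α] [MeasurableSpace β] [NormedAddCommGroup E]
  {μ : Measure α} {ν : Measure β} {q : ℝ≥0∞}

theorem eLpNorm_prod [SFinite ν] (hq : q ≠ ∞) {f : α × β → E}
    (hf : AEStronglyMeasurable f (μ.prod ν)) :
    eLpNorm f q (μ.prod ν) = eLpNorm (fun x ↦ eLpNorm (fun y ↦ f (x, y)) q ν) q μ := by
  rcases eq_or_ne q 0 with rfl | hq₀
  · simp only [eLpNorm_exponent_zero]
  · simp only [eLpNorm_eq_lintegral_rpow_enorm_toReal hq₀ hq, enorm_eq_self]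
    rw [lintegral_prod _ (hf.enorm.pow_const _)]
    have hq' : q.toReal ≠ 0 := (ENNReal.toReal_pos hq₀ hq).ne'
    simp only [← ENNReal.rpow_mul, one_div_mul_cancel hq', ENNReal.rpow_one]

theorem eLpNorm_prod_symm [SFinite μ] [SFinite ν] (hq : q ≠ ∞) {f : α × β → E}
    (hf : AEStronglyMeasurable f (μ.prod ν)) :
    eLpNorm f q (μ.prod ν) = eLpNorm (fun y ↦ eLpNorm (fun x ↦ f (x, y)) q μ) q ν := by
  have hswap : MeasurePreserving Prod.swap (ν.prod μ) (μ.prod ν) :=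
    Measure.measurePreserving_swap
  rw [← eLpNorm_comp_measurePreserving hf hswap,
    eLpNorm_prod hq (hf.comp_measurePreserving hswap)]
  rfl

theorem eLpNorm_lintegral_enorm_le_eLpNorm_prod [IsProbabilityMeasure ν] (hq₁ : 1 ≤ q)
    (hq : q ≠ ∞) {f : α × β → E} (hf : AEStronglyMeasurable f (μ.prod ν)) :
    eLpNorm (fun x ↦ ∫⁻ y, ‖f (x, y)‖ₑ ∂ν) q μ ≤ eLpNorm f q (μ.prod ν) := by
  rw [eLpNorm_prod hq hf]
  refine eLpNorm_mono_enorm_ae ?_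
  filter_upwards [hf.prodMk_left] with x hx
  simpa only [enorm_eq_self, eLpNorm_one_eq_lintegral_enorm]
    using eLpNorm_le_eLpNorm_of_exponent_le hq₁ hx

theorem eLpNorm_sub_integral_le_eLpNorm_prod [NormedSpace ℝ E] [CompleteSpace E]
    [IsProbabilityMeasure μ] (hq₁ : 1 ≤ q) (hq : q ≠ ∞) {f : α → E} (hf : Integrable f μ) :
    eLpNorm (fun x ↦ f x - ∫ y, f y ∂μ) q μ
      ≤ eLpNorm (fun z : α × α ↦ f z.1 - f z.2) q (μ.prod μ) := by
  refine (eLpNorm_mono_enorm fun x ↦ ?_).trans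
    (eLpNorm_lintegral_enorm_le_eLpNorm_prod hq₁ hq
      ((hf.comp_fst μ).sub (hf.comp_snd μ)).aestronglyMeasurable)
  have hmean : f x - ∫ y, f y ∂μ = ∫ y, (f x - f y) ∂μ := by
    rw [integral_sub (integrable_const _) hf, integral_const, probReal_univ, one_smul]
  rw [hmean, enorm_eq_self]
  exact enorm_integral_le_lintegral_enorm _

theorem eLpNorm_sq_eq_eLpNorm_norm_sq (f : α → E) :
    eLpNorm f q μ ^ 2 = eLpNorm (fun x ↦ ‖f x‖ ^ 2) (q / 2) μ := by
  have h := eLpNorm_norm_rpow (p := q / 2) (μ := μ) f two_pos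
  rw [ENNReal.ofReal_ofNat, ENNReal.div_mul_cancel two_ne_zero ENNReal.ofNat_ne_top] at h
  exact_mod_cast h.symm

theorem eLpNorm_sq_le_sum_eLpNorm_apply_sq {ι : Type*} [Fintype ι] (hq : 2 ≤ q)
    {f : α → EuclideanSpace ℝ ι} (hf : AEStronglyMeasurable f μ) :
    eLpNorm f q μ ^ 2 ≤ ∑ i, eLpNorm (fun x ↦ f x i) q μ ^ 2 := by
  have hcoord (i : ι) : AEStronglyMeasurable (fun x ↦ f x i) μ :=
    (EuclideanSpace.proj (𝕜 := ℝ) i).continuous.comp_aestronglyMeasurable hf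
  have hq' : 1 ≤ q / 2 := by
    rwa [ENNReal.le_div_iff_mul_le (by simp) (by simp), one_mul]
  simp only [eLpNorm_sq_eq_eLpNorm_norm_sq, EuclideanSpace.norm_sq_eq]
  calc eLpNorm (fun x ↦ ∑ i, ‖f x i‖ ^ 2) (q / 2) μ
      = eLpNorm (∑ i, fun x ↦ ‖f x i‖ ^ 2) (q / 2) μ := by
        congr 1 with x; rw [Finset.sum_apply]
    _ ≤ ∑ i, eLpNorm (fun x ↦ ‖f x i‖ ^ 2) (q / 2) μ :=
        eLpNorm_sum_le (fun i _ ↦ (hcoord i).norm.pow 2) hq'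

theorem eLpNorm_mul_le_eLpNorm_two_mul {f g : α → ℝ} (hf : AEStronglyMeasurable f μ)
    (hg : AEStronglyMeasurable g μ) :
    eLpNorm (fun x ↦ f x * g x) q μ ≤ eLpNorm f (2 * q) μ * eLpNorm g (2 * q) μ := by
  have : ENNReal.HolderTriple (2 * q) (2 * q) q := ⟨by
    rw [ENNReal.mul_inv (by simp) (by simp), ← add_mul, ENNReal.inv_two_add_inv_two, one_mul]⟩
  exact eLpNorm_smul_le_mul_eLpNorm (p := 2 * q) (q := 2 * q) (r := q) (f := g) hg (φ := f) hf

theorem integral_abs_pow_le_of_eLpNorm_le {n : ℕ} (hn : n ≠ 0) {f : α → ℝ}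
    (hf : AEStronglyMeasurable f μ) {a : ℝ≥0∞} (ha : a ≠ ∞) (hfa : eLpNorm f n μ ≤ a) :
    ∫ x, |f x| ^ n ∂μ ≤ a.toReal ^ n := by
  have hpow : eLpNorm f n μ ^ n = ∫⁻ x, ‖f x‖ₑ ^ n ∂μ := by
    have h := eLpNorm_nnreal_pow_eq_lintegral (f := f) (μ := μ) (p := n) (by exact_mod_cast hn)
    simpa using h
  have hint : ∫ x, |f x| ^ n ∂μ = (∫⁻ x, ‖f x‖ₑ ^ n ∂μ).toReal := by
    have hmeas : AEStronglyMeasurable (fun x ↦ |f x| ^ n) μ := hf.norm.pow n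
    rw [integral_eq_lintegral_of_nonneg_ae (.of_forall fun x ↦ pow_nonneg (abs_nonneg _) n) hmeas]
    simp only [← ofReal_norm, Real.norm_eq_abs, ENNReal.ofReal_pow (abs_nonneg _)]
  rw [hint, ← hpow, ← ENNReal.toReal_pow]
  exact ENNReal.toReal_mono (ENNReal.pow_ne_top ha) (by gcongr)

end LpSeminorm

theorem integral_sub_mul_sub_prod {α : Type*} [MeasurableSpace α] {μ : Measure α}
    [IsProbabilityMeasure μ] {X Y : α → ℝ} (hX : MemLp X 2 μ) (hY : MemLp Y 2 μ) :
    ∫ z : α × α, (X z.1 - X z.2) * (Y z.1 - Y z.2) ∂(μ.prod μ) = 2 * cov[X, Y; μ] := by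
  have hXY : Integrable (fun x ↦ X x * Y x) μ := hX.integrable_mul hY
  have hX₁ : Integrable X μ := hX.integrable one_le_two
  have hY₁ : Integrable Y μ := hY.integrable one_le_two
  have hdiag : Integrable (fun z : α × α ↦ X z.1 * Y z.1 + X z.2 * Y z.2) (μ.prod μ) :=
    (hXY.comp_fst μ).add (hXY.comp_snd μ)
  have hcross : Integrable (fun z : α × α ↦ X z.1 * Y z.2 + Y z.1 * X z.2) (μ.prod μ) :=
    (hX₁.mul_prod hY₁).add (hY₁.mul_prod hX₁)
  calc ∫ z : α × α, (X z.1 - X z.2) * (Y z.1 - Y z.2) ∂(μ.prod μ)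
      = ∫ z : α × α, ((X z.1 * Y z.1 + X z.2 * Y z.2)
          - (X z.1 * Y z.2 + Y z.1 * X z.2)) ∂(μ.prod μ) := by
        congr 1 with z; ring
    _ = (∫ x, X x * Y x ∂μ + ∫ x, X x * Y x ∂μ)
          - ((∫ x, X x ∂μ) * ∫ x, Y x ∂μ + (∫ x, Y x ∂μ) * ∫ x, X x ∂μ) := by
        rw [integral_sub hdiag hcross, integral_add (hXY.comp_fst μ) (hXY.comp_snd μ),
          integral_add (hX₁.mul_prod hY₁) (hY₁.mul_prod hX₁), integral_prod_mul,
          integral_prod_mul, integral_fun_fst (fun x ↦ X x * Y x),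
          integral_fun_snd (fun x ↦ X x * Y x), probReal_univ, one_smul]
    _ = 2 * cov[X, Y; μ] := by
        rw [covariance_eq_sub hX hY]
        simp only [Pi.mul_apply]
        ring

section RotationInterpolation

open ContinuousLinearMap renaming rotation → rot, rotation_apply → rot_apply

variable {E F : Type*} [NormedAddCommGroup E] [NormedSpace ℝ E]
  [NormedAddCommGroup F] [NormedSpace ℝ F] {f : E → F} {q : ℝ≥0∞}

theorem hasDerivAt_comp_rotation_fst {z : E × E} {θ : ℝ}
    (hf : DifferentiableAt ℝ f (rot θ z).1) :
    HasDerivAt (fun φ ↦ f (rot φ z).1)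
      (fderiv ℝ f (rot θ z).1 (rot θ z).2) θ := by
  refine hf.hasFDerivAt.comp_hasDerivAt θ ?_
  simp only [rot_apply]
  exact ((Real.hasDerivAt_cos θ).smul_const z.1).add ((Real.hasDerivAt_sin θ).smul_const z.2)

theorem continuous_fderiv_rotation_apply (hf : ContDiff ℝ 1 f) :
    Continuous fun a : (E × E) × ℝ ↦
      fderiv ℝ f (rot (Real.pi / 2 * a.2) a.1).1 (rot (Real.pi / 2 * a.2) a.1).2 := by
  have := hf.continuous_fderiv one_ne_zero
  simp only [rot_apply]
  fun_prop

theorem enorm_sub_le_lintegral_enorm_fderiv_rotation [CompleteSpace F] (hf : ContDiff ℝ 1 f)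
    (z : E × E) :
    ‖f z.1 - f z.2‖ₑ ≤ ∫⁻ t in Set.Ioc (0 : ℝ) 1, ‖(Real.pi / 2) •
      fderiv ℝ f (rot (Real.pi / 2 * t) z).1 (rot (Real.pi / 2 * t) z).2‖ₑ := by
  have hderiv (t : ℝ) : HasDerivAt (fun s ↦ f (rot (Real.pi / 2 * s) z).1)
      ((Real.pi / 2) •
        fderiv ℝ f (rot (Real.pi / 2 * t) z).1 (rot (Real.pi / 2 * t) z).2) t := by
    have hmul : HasDerivAt (fun s ↦ Real.pi / 2 * s) (Real.pi / 2) t := by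
      simpa using (hasDerivAt_id t).const_mul (Real.pi / 2)
    exact (hasDerivAt_comp_rotation_fst (hf.differentiable one_ne_zero _)).scomp t hmul
  have hcont : Continuous fun t : ℝ ↦ (Real.pi / 2) •
      fderiv ℝ f (rot (Real.pi / 2 * t) z).1 (rot (Real.pi / 2 * t) z).2 :=
    ((continuous_fderiv_rotation_apply hf).comp (Continuous.prodMk_right z)).const_smul _
  have hFTC := intervalIntegral.integral_eq_sub_of_hasDerivAt (fun t _ ↦ hderiv t)
    (hcont.intervalIntegrable 0 1)
  rw [intervalIntegral.integral_of_le zero_le_one] at hFTC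
  calc ‖f z.1 - f z.2‖ₑ = ‖f z.2 - f z.1‖ₑ := by rw [← enorm_neg, neg_sub]
    _ = ‖∫ t in Set.Ioc (0 : ℝ) 1, (Real.pi / 2) • fderiv ℝ f (rot (Real.pi / 2 * t) z).1
          (rot (Real.pi / 2 * t) z).2‖ₑ := by
        rw [hFTC]; simp [rot_apply]
    _ ≤ _ := enorm_integral_le_lintegral_enorm _

end RotationInterpolation

/-- The `L^q` norm of a standard real Gaussian variable. -/
def gaussianLpNorm (q : ℝ≥0∞) : ℝ≥0∞ := eLpNorm id q (gaussianReal 0 1)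

theorem gaussianLpNorm_ne_top {q : ℝ≥0∞} (hq : q ≠ ∞) : gaussianLpNorm q ≠ ∞ :=
  (memLp_id_gaussianReal' q hq).eLpNorm_ne_top

section CenteredGaussian

open ContinuousLinearMap renaming rotation → rot, rotation_apply → rot_apply

variable {E F : Type*} [NormedAddCommGroup E] [NormedSpace ℝ E] [MeasurableSpace E] [BorelSpace E]
  [NormedAddCommGroup F] [NormedSpace ℝ F] {μ : Measure E} [IsGaussian μ] {q : ℝ≥0∞}

theorem memLp_sq_strongDual (L : StrongDual ℝ E) : MemLp (fun x ↦ L x ^ 2) 2 μ := by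
  have h := (IsGaussian.memLp_dual μ L (2 * 2) (by finiteness)).norm_rpow_div 2
  rw [ENNReal.mul_div_cancel_right two_ne_zero ENNReal.ofNat_ne_top] at h
  simpa using h

theorem eLpNorm_strongDual_eq (hμ : ∀ L : StrongDual ℝ E, ∫ x, L x ∂μ = 0)
    (L : StrongDual ℝ E) : eLpNorm L q μ = ‖√Var[L; μ]‖ₑ * gaussianLpNorm q := by
  have hlaw : μ.map L = (gaussianReal 0 1).map (√Var[L; μ] • id) := by
    have h := gaussianReal_map_const_mul (μ := 0) (v := 1) √Var[L; μ]
    rw [mul_zero, mul_one] at h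
    rw [IsGaussian.map_eq_gaussianReal, hμ]
    refine Eq.trans ?_ h.symm
    congr 1
    ext
    simp [variance_nonneg]
  have h := eLpNorm_map_measure (p := q) (f := L) (μ := μ) (g := id) aestronglyMeasurable_id
    (by fun_prop)
  rw [Function.id_comp] at h
  rw [← h, hlaw, eLpNorm_map_measure aestronglyMeasurable_id (by fun_prop), Function.id_comp,
    eLpNorm_const_smul, gaussianLpNorm]

theorem eLpNorm_strongDual_le (hμ : ∀ L : StrongDual ℝ E, ∫ x, L x ∂μ = 0) {σ : ℝ≥0}
    (hσ : ∀ L : StrongDual ℝ E, Var[L; μ] ≤ (σ * ‖L‖) ^ 2) (L : StrongDual ℝ E) :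
    eLpNorm L q μ ≤ σ * gaussianLpNorm q * ‖L‖ₑ := by
  have hsd : ‖√Var[L; μ]‖ₑ ≤ σ * ‖L‖ₑ := by
    rw [Real.enorm_of_nonneg (Real.sqrt_nonneg _), ← ofReal_norm,
      ← ENNReal.ofReal_coe_nnreal, ← ENNReal.ofReal_mul σ.coe_nonneg]
    exact ENNReal.ofReal_le_ofReal (Real.sqrt_le_left (by positivity) |>.mpr (hσ L))
  rw [eLpNorm_strongDual_eq hμ, mul_right_comm]
  gcongr

variable [CompleteSpace E] [SecondCountableTopology E]

theorem measurePreserving_rotation (hμ : ∀ L : StrongDual ℝ E, ∫ x, L x ∂μ = 0) (θ : ℝ) :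
    MeasurePreserving (rot θ : E × E → E × E) (μ.prod μ) (μ.prod μ) :=
  ⟨by fun_prop, IsGaussian.map_rotation_eq_self_of_forall_strongDual_eq_zero hμ θ⟩

theorem eLpNorm_sub_integral_le_eLpNorm_fderiv_prod [CompleteSpace F]
    (hμ : ∀ L : StrongDual ℝ E, ∫ x, L x ∂μ = 0) (hq₁ : 1 ≤ q) (hq : q ≠ ∞) {f : E → F}
    (hf : ContDiff ℝ 1 f) (hfμ : Integrable f μ) :
    eLpNorm (fun x ↦ f x - ∫ y, f y ∂μ) q μ
      ≤ ‖Real.pi / 2‖ₑ * eLpNorm (fun z : E × E ↦ fderiv ℝ f z.1 z.2) q (μ.prod μ) := by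
  let ν : Measure ℝ := volume.restrict (Set.Ioc 0 1)
  have : IsProbabilityMeasure ν := ⟨by simp [ν]⟩
  let D : E × E → F := fun z ↦ fderiv ℝ f z.1 z.2
  let G : (E × E) × ℝ → F := fun a ↦ (Real.pi / 2) • D (rot (Real.pi / 2 * a.2) a.1)
  have hD : Continuous D := by
    have := hf.continuous_fderiv one_ne_zero
    fun_prop
  have hG : AEStronglyMeasurable G ((μ.prod μ).prod ν) :=
    ((continuous_fderiv_rotation_apply hf).const_smul _).aestronglyMeasurable
  calc eLpNorm (fun x ↦ f x - ∫ y, f y ∂μ) q μ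
      ≤ eLpNorm (fun z : E × E ↦ f z.1 - f z.2) q (μ.prod μ) :=
        eLpNorm_sub_integral_le_eLpNorm_prod hq₁ hq hfμ
    _ ≤ eLpNorm (fun z ↦ ∫⁻ t, ‖G (z, t)‖ₑ ∂ν) q (μ.prod μ) :=
        eLpNorm_mono_enorm fun z ↦ enorm_sub_le_lintegral_enorm_fderiv_rotation hf z
    _ ≤ eLpNorm G q ((μ.prod μ).prod ν) := eLpNorm_lintegral_enorm_le_eLpNorm_prod hq₁ hq hG
    _ = eLpNorm (fun t ↦ eLpNorm (fun z ↦ G (z, t)) q (μ.prod μ)) q ν :=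
        eLpNorm_prod_symm hq hG
    _ = eLpNorm (fun _ ↦ ‖Real.pi / 2‖ₑ * eLpNorm D q (μ.prod μ)) q ν := by
        congr 1 with t
        rw [← eLpNorm_comp_measurePreserving hD.aestronglyMeasurable
          (measurePreserving_rotation hμ (Real.pi / 2 * t)), ← eLpNorm_const_smul]
        rfl
    _ = ‖Real.pi / 2‖ₑ * eLpNorm D q (μ.prod μ) := by
        rw [eLpNorm_const _ (by positivity) (NeZero.ne ν), measure_univ, ENNReal.one_rpow, mul_one,
          enorm_eq_self]

/-- The constant of the `L^q` Poincaré inequality for a centered Gaussian measure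
whose covariance form is bounded by `σ ^ 2`. -/
def gaussianPoincareConst (σ : ℝ≥0) (q : ℝ≥0∞) : ℝ≥0∞ :=
  ‖Real.pi / 2‖ₑ * (σ * gaussianLpNorm q)

theorem gaussianPoincareConst_ne_top (σ : ℝ≥0) (hq : q ≠ ∞) : gaussianPoincareConst σ q ≠ ∞ :=
  ENNReal.mul_ne_top enorm_ne_top (ENNReal.mul_ne_top ENNReal.coe_ne_top (gaussianLpNorm_ne_top hq))

theorem eLpNorm_sub_integral_le_eLpNorm_fderiv (hμ : ∀ L : StrongDual ℝ E, ∫ x, L x ∂μ = 0)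
    {σ : ℝ≥0} (hσ : ∀ L : StrongDual ℝ E, Var[L; μ] ≤ (σ * ‖L‖) ^ 2) (hq₁ : 1 ≤ q)
    (hq : q ≠ ∞) {f : E → ℝ} (hf : ContDiff ℝ 1 f) (hfμ : Integrable f μ) :
    eLpNorm (fun x ↦ f x - ∫ y, f y ∂μ) q μ
      ≤ gaussianPoincareConst σ q * eLpNorm (fderiv ℝ f) q μ := by
  have hD : Continuous fun z : E × E ↦ fderiv ℝ f z.1 z.2 := by
    have := hf.continuous_fderiv one_ne_zero
    fun_prop
  rw [gaussianPoincareConst, mul_assoc]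
  refine (eLpNorm_sub_integral_le_eLpNorm_fderiv_prod hμ hq₁ hq hf hfμ).trans ?_
  rw [eLpNorm_prod hq hD.aestronglyMeasurable]
  gcongr
  refine eLpNorm_le_mul_eLpNorm_of_ae_le_mul'' q
    (hf.continuous_fderiv one_ne_zero).aestronglyMeasurable (.of_forall fun x ↦ ?_)
  simpa only [enorm_eq_self] using eLpNorm_strongDual_le hμ hσ (fderiv ℝ f x)

theorem covariance_sq_strongDual (hμ : ∀ L : StrongDual ℝ E, ∫ x, L x ∂μ = 0)
    (L₁ L₂ : StrongDual ℝ E) :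
    cov[fun x ↦ L₁ x ^ 2, fun x ↦ L₂ x ^ 2; μ] = 2 * cov[L₁, L₂; μ] ^ 2 := by
  have hmem (L : StrongDual ℝ E) : MemLp L 2 μ := IsGaussian.memLp_dual μ L 2 (by simp)
  -- In the coordinates rotated by `π / 4`, the difference of squares `L x ^ 2 - L y ^ 2`
  -- becomes the product `2 * L x * L y`, whose factors are independent.
  have hrot (L : StrongDual ℝ E) (z : E × E) :
      L (rot (Real.pi / 4) z).1 ^ 2 - L (rot (Real.pi / 4) z).2 ^ 2 = 2 * (L z.1 * L z.2) := by
    simp only [rot_apply, map_add, map_smul, smul_eq_mul, Real.cos_pi_div_four,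
      Real.sin_pi_div_four]
    linear_combination L z.1 * L z.2 * Real.sq_sqrt zero_le_two
  have hpres := measurePreserving_rotation hμ (Real.pi / 4)
  have hdouble : 2 * cov[fun x ↦ L₁ x ^ 2, fun x ↦ L₂ x ^ 2; μ] = 2 * (2 * cov[L₁, L₂; μ] ^ 2) :=
    calc 2 * cov[fun x ↦ L₁ x ^ 2, fun x ↦ L₂ x ^ 2; μ]
      _ = ∫ z : E × E, (L₁ z.1 ^ 2 - L₁ z.2 ^ 2) * (L₂ z.1 ^ 2 - L₂ z.2 ^ 2) ∂(μ.prod μ) :=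
        (integral_sub_mul_sub_prod (memLp_sq_strongDual L₁) (memLp_sq_strongDual L₂)).symm
      _ = ∫ z : E × E, 2 * (L₁ z.1 * L₁ z.2) * (2 * (L₂ z.1 * L₂ z.2)) ∂(μ.prod μ) := by
        simp only [← hrot]
        rw [← hpres.map_eq, integral_map (by fun_prop)
          (Continuous.aestronglyMeasurable (by fun_prop)), hpres.map_eq]
      _ = ∫ z : E × E, 4 * ((L₁ z.1 * L₂ z.1) * (L₁ z.2 * L₂ z.2)) ∂(μ.prod μ) := by
        congr 1 with z; ring
      _ = 2 * (2 * cov[L₁, L₂; μ] ^ 2) := by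
        rw [integral_const_mul, integral_prod_mul (fun x ↦ L₁ x * L₂ x) (fun x ↦ L₁ x * L₂ x),
          covariance_eq_sub (hmem L₁) (hmem L₂), hμ L₁]
        simp only [Pi.mul_apply]
        ring
  exact mul_left_cancel₀ two_ne_zero hdouble

end CenteredGaussian

section EuclideanSpace

variable {ι : Type*} [Fintype ι]

theorem gradient_apply_eq_fderiv_single [DecidableEq ι] (f : EuclideanSpace ℝ ι → ℝ)
    (x : EuclideanSpace ℝ ι) (i : ι) :
    gradient f x i = fderiv ℝ f x (EuclideanSpace.single i 1) := by
  rw [gradient, ← InnerProductSpace.toDual_symm_apply, EuclideanSpace.inner_single_right]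
  simp

variable {μ : Measure (EuclideanSpace ℝ ι)} [IsGaussian μ] {σ : ℝ≥0}
  {q : ℝ≥0∞}

theorem eLpNorm_sub_integral_le_of_eLpNorm_gradient_apply_le
    (hμ : ∀ L : StrongDual ℝ (EuclideanSpace ℝ ι), ∫ x, L x ∂μ = 0)
    (hσ : ∀ L : StrongDual ℝ (EuclideanSpace ℝ ι), Var[L; μ] ≤ (σ * ‖L‖) ^ 2) (hq₂ : 2 ≤ q)
    (hq : q ≠ ∞) {f : EuclideanSpace ℝ ι → ℝ} (hf : ContDiff ℝ 1 f) (hfμ : Integrable f μ)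
    {K : ℝ≥0∞} (hK : ∀ i, eLpNorm (fun x ↦ gradient f x i) q μ ≤ K) :
    eLpNorm (fun x ↦ f x - ∫ y, f y ∂μ) q μ
      ≤ gaussianPoincareConst σ q * (NNReal.sqrt (Fintype.card ι) * K) := by
  have hgrad : Continuous (gradient f) :=
    (InnerProductSpace.toDual ℝ (EuclideanSpace ℝ ι)).symm.continuous.comp
      (hf.continuous_fderiv one_ne_zero)
  have hnorm : eLpNorm (fderiv ℝ f) q μ = eLpNorm (gradient f) q μ :=
    eLpNorm_congr_norm_ae (.of_forall fun x ↦ (LinearIsometryEquiv.norm_map _ _).symm)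
  refine (eLpNorm_sub_integral_le_eLpNorm_fderiv hμ hσ (one_le_two.trans hq₂) hq hf hfμ).trans ?_
  rw [hnorm]
  gcongr
  refine (ENNReal.pow_le_pow_left_iff two_ne_zero).mp ?_
  calc eLpNorm (gradient f) q μ ^ 2
      ≤ ∑ i, eLpNorm (fun x ↦ gradient f x i) q μ ^ 2 :=
        eLpNorm_sq_le_sum_eLpNorm_apply_sq hq₂ hgrad.aestronglyMeasurable
    _ ≤ ∑ _i : ι, K ^ 2 := by gcongr with i; exact hK i
    _ = (NNReal.sqrt (Fintype.card ι) * K) ^ 2 := by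
        rw [sum_const, card_univ, nsmul_eq_mul, mul_pow, ← ENNReal.coe_pow, NNReal.sq_sqrt]
        norm_cast

/-- The squared coordinate `x i ^ 2`, centered under `μ`: its Wick square if `μ` is Gaussian. -/
def centeredSq (μ : Measure (EuclideanSpace ℝ ι)) (i : ι) (x : EuclideanSpace ℝ ι) : ℝ :=
  x i ^ 2 - ∫ y, y i ^ 2 ∂μ

theorem hasFDerivAt_centeredSq (μ : Measure (EuclideanSpace ℝ ι)) (i : ι)
    (x : EuclideanSpace ℝ ι) :
    HasFDerivAt (centeredSq μ i) ((2 * x i) • EuclideanSpace.proj (𝕜 := ℝ) i) x := by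
  have h := ((EuclideanSpace.proj (𝕜 := ℝ) i).hasFDerivAt (x := x)).pow 2
  exact (h.sub_const (∫ y, y i ^ 2 ∂μ)).congr_fderiv (by simp)

theorem contDiff_centeredSq (μ : Measure (EuclideanSpace ℝ ι)) (i : ι) :
    ContDiff ℝ 1 (centeredSq μ i) := by
  unfold centeredSq
  fun_prop

/-- The linear form with coefficients `c` in the centered squared coordinates, as it appears in the
gradient of a quadratic form. -/
def centeredSqLinearForm (μ : Measure (EuclideanSpace ℝ ι)) (c : ι → ℝ)
    (x : EuclideanSpace ℝ ι) : ℝ :=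
  ∑ j, c j * centeredSq μ j x

/-- The quadratic form with matrix `C` in the centered squared coordinates; minus its mean, it is
the variable `g` of the theorem. -/
def centeredSqQuadraticForm (μ : Measure (EuclideanSpace ℝ ι)) (C : Matrix ι ι ℝ)
    (x : EuclideanSpace ℝ ι) : ℝ :=
  ∑ i, ∑ j, C i j * (centeredSq μ i x * centeredSq μ j x)

theorem contDiff_centeredSqLinearForm (μ : Measure (EuclideanSpace ℝ ι)) (c : ι → ℝ) :
    ContDiff ℝ 1 (centeredSqLinearForm μ c) :=
  .sum fun j _ ↦ contDiff_const.mul (contDiff_centeredSq μ j)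

theorem contDiff_centeredSqQuadraticForm (μ : Measure (EuclideanSpace ℝ ι))
    (C : Matrix ι ι ℝ) : ContDiff ℝ 1 (centeredSqQuadraticForm μ C) :=
  .sum fun i _ ↦ .sum fun j _ ↦
    contDiff_const.mul ((contDiff_centeredSq μ i).mul (contDiff_centeredSq μ j))

theorem gradient_centeredSqLinearForm_apply (μ : Measure (EuclideanSpace ℝ ι)) (c : ι → ℝ)
    (x : EuclideanSpace ℝ ι) (k : ι) :
    gradient (centeredSqLinearForm μ c) x k = 2 * c k * x k := by
  classical
  have hderiv : HasFDerivAt (centeredSqLinearForm μ c)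
      (∑ j, c j • (2 * x j) • EuclideanSpace.proj (𝕜 := ℝ) j) x :=
    .fun_sum fun j _ ↦ (hasFDerivAt_centeredSq μ j x).const_mul (c j)
  rw [gradient_apply_eq_fderiv_single, hderiv.fderiv]
  simp only [_root_.sum_apply, smul_apply, PiLp.proj_apply, PiLp.single_apply, smul_eq_mul,
    mul_ite, mul_one, mul_zero, sum_ite_eq', mem_univ, if_true]
  ring

theorem gradient_centeredSqQuadraticForm_apply (μ : Measure (EuclideanSpace ℝ ι))
    (C : Matrix ι ι ℝ) (x : EuclideanSpace ℝ ι) (k : ι) :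
    gradient (centeredSqQuadraticForm μ C) x k
      = 2 * (x k * centeredSqLinearForm μ (fun j ↦ C k j + C j k) x) := by
  classical
  have hderiv : HasFDerivAt (centeredSqQuadraticForm μ C)
      (∑ i, ∑ j, C i j • (centeredSq μ i x • (2 * x j) • EuclideanSpace.proj (𝕜 := ℝ) j
        + centeredSq μ j x • (2 * x i) • EuclideanSpace.proj (𝕜 := ℝ) i)) x :=
    .fun_sum fun i _ ↦ .fun_sum fun j _ ↦
      ((hasFDerivAt_centeredSq μ i x).mul (hasFDerivAt_centeredSq μ j x)).const_mul (C i j)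
  calc gradient (centeredSqQuadraticForm μ C) x k
      = ∑ j, C j k * (centeredSq μ j x * (2 * x k))
          + ∑ j, C k j * (centeredSq μ j x * (2 * x k)) := by
        rw [gradient_apply_eq_fderiv_single, hderiv.fderiv]
        simp [sum_add_distrib]
    _ = 2 * (x k * centeredSqLinearForm μ (fun j ↦ C k j + C j k) x) := by
        rw [centeredSqLinearForm, ← sum_add_distrib, mul_sum, mul_sum]
        exact sum_congr rfl fun j _ ↦ by ring

theorem memLp_centeredSq (i : ι) : MemLp (centeredSq μ i) 2 μ :=
  (memLp_sq_strongDual (EuclideanSpace.proj (𝕜 := ℝ) i)).sub (memLp_const _)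

theorem integral_centeredSq (i : ι) : ∫ x, centeredSq μ i x ∂μ = 0 := by
  have hsq : Integrable (fun x : EuclideanSpace ℝ ι ↦ x i ^ 2) μ :=
    (memLp_sq_strongDual (EuclideanSpace.proj (𝕜 := ℝ) i)).integrable one_le_two
  simp only [centeredSq]
  rw [integral_sub hsq (integrable_const _), integral_const, probReal_univ, one_smul, sub_self]

theorem integral_centeredSq_mul_centeredSq
    (hμ : ∀ L : StrongDual ℝ (EuclideanSpace ℝ ι), ∫ x, L x ∂μ = 0) (i j : ι) :
    ∫ x, centeredSq μ i x * centeredSq μ j x ∂μ = 2 * cov[fun x ↦ x i, fun x ↦ x j; μ] ^ 2 :=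
  covariance_sq_strongDual hμ (EuclideanSpace.proj i) (EuclideanSpace.proj j)

theorem integrable_centeredSqLinearForm (c : ι → ℝ) :
    Integrable (centeredSqLinearForm μ c) μ :=
  integrable_finsetSum _ fun j _ ↦ ((memLp_centeredSq j).integrable one_le_two).const_mul (c j)

theorem integral_centeredSqLinearForm (c : ι → ℝ) :
    ∫ x, centeredSqLinearForm μ c x ∂μ = 0 := by
  simp only [centeredSqLinearForm]
  rw [integral_finsetSum _ fun j _ ↦ ((memLp_centeredSq j).integrable one_le_two).const_mul (c j)]
  simp only [integral_const_mul, integral_centeredSq, mul_zero, sum_const_zero]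

theorem integrable_const_mul_centeredSq_mul_centeredSq (c : ℝ) (i j : ι) :
    Integrable (fun x ↦ c * (centeredSq μ i x * centeredSq μ j x)) μ :=
  ((memLp_centeredSq i).integrable_mul (memLp_centeredSq j)).const_mul c

theorem integrable_centeredSqQuadraticForm (C : Matrix ι ι ℝ) :
    Integrable (centeredSqQuadraticForm μ C) μ :=
  integrable_finsetSum _ fun i _ ↦ integrable_finsetSum _ fun j _ ↦
    integrable_const_mul_centeredSq_mul_centeredSq (C i j) i j

theorem integral_centeredSqQuadraticForm
    (hμ : ∀ L : StrongDual ℝ (EuclideanSpace ℝ ι), ∫ x, L x ∂μ = 0) (C : Matrix ι ι ℝ) :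
    ∫ x, centeredSqQuadraticForm μ C x ∂μ
      = ∑ i, ∑ j, C i j * (2 * cov[fun x ↦ x i, fun x ↦ x j; μ] ^ 2) := by
  have hint (i j : ι) := integrable_const_mul_centeredSq_mul_centeredSq (μ := μ) (C i j) i j
  simp only [centeredSqQuadraticForm]
  rw [integral_finsetSum _ fun i _ ↦ integrable_finsetSum _ fun j _ ↦ hint i j]
  refine sum_congr rfl fun i _ ↦ ?_
  rw [integral_finsetSum _ fun j _ ↦ hint i j]
  simp only [integral_const_mul, integral_centeredSq_mul_centeredSq hμ]

theorem eLpNorm_apply_le (hμ : ∀ L : StrongDual ℝ (EuclideanSpace ℝ ι), ∫ x, L x ∂μ = 0)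
    (hσ : ∀ L : StrongDual ℝ (EuclideanSpace ℝ ι), Var[L; μ] ≤ (σ * ‖L‖) ^ 2) (i : ι) :
    eLpNorm (fun x ↦ x i) q μ ≤ σ * gaussianLpNorm q := by
  have hproj : ‖EuclideanSpace.proj (𝕜 := ℝ) i‖ₑ ≤ 1 := by
    rw [← ofReal_norm, ENNReal.ofReal_le_one]
    exact ContinuousLinearMap.opNorm_le_bound _ zero_le_one fun x ↦ by
      simpa using PiLp.norm_apply_le x i
  exact (eLpNorm_strongDual_le hμ hσ (EuclideanSpace.proj i)).trans (mul_le_of_le_one_right' hproj)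

theorem eLpNorm_centeredSqLinearForm_le
    (hμ : ∀ L : StrongDual ℝ (EuclideanSpace ℝ ι), ∫ x, L x ∂μ = 0)
    (hσ : ∀ L : StrongDual ℝ (EuclideanSpace ℝ ι), Var[L; μ] ≤ (σ * ‖L‖) ^ 2) (hq₂ : 2 ≤ q)
    (hq : q ≠ ∞) {B : ℝ≥0} {c : ι → ℝ} (hc : ∀ i, ‖c i‖ₑ ≤ B) :
    eLpNorm (centeredSqLinearForm μ c) q μ
      ≤ gaussianPoincareConst σ q
        * (NNReal.sqrt (Fintype.card ι) * (2 * B * (σ * gaussianLpNorm q))) := by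
  have hgrad (k : ι) : eLpNorm (fun x ↦ gradient (centeredSqLinearForm μ c) x k) q μ
      ≤ 2 * B * (σ * gaussianLpNorm q) := by
    simp only [gradient_centeredSqLinearForm_apply]
    calc eLpNorm (fun x : EuclideanSpace ℝ ι ↦ 2 * c k * x k) q μ
        = ‖2 * c k‖ₑ * eLpNorm (fun x ↦ x k) q μ := eLpNorm_const_smul (2 * c k) _ q μ
      _ ≤ 2 * B * (σ * gaussianLpNorm q) := by
        rw [enorm_mul, Real.enorm_of_nonneg zero_le_two, ENNReal.ofReal_ofNat]
        gcongr
        exacts [hc k, eLpNorm_apply_le hμ hσ k]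
  have h := eLpNorm_sub_integral_le_of_eLpNorm_gradient_apply_le hμ hσ hq₂ hq
    (contDiff_centeredSqLinearForm μ c) (integrable_centeredSqLinearForm c) hgrad
  simpa only [integral_centeredSqLinearForm, sub_zero] using h

theorem eLpNorm_gradient_centeredSqQuadraticForm_apply_le
    (hμ : ∀ L : StrongDual ℝ (EuclideanSpace ℝ ι), ∫ x, L x ∂μ = 0)
    (hσ : ∀ L : StrongDual ℝ (EuclideanSpace ℝ ι), Var[L; μ] ≤ (σ * ‖L‖) ^ 2) (hq₂ : 2 ≤ q)
    (hq : q ≠ ∞) {B : ℝ≥0} {C : Matrix ι ι ℝ} (hC : ∀ i j, ‖C i j‖ₑ ≤ B) (k : ι) :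
    eLpNorm (fun x ↦ gradient (centeredSqQuadraticForm μ C) x k) q μ
      ≤ gaussianPoincareConst σ (2 * q) * (8 * B * (σ * gaussianLpNorm (2 * q)) ^ 2)
        * NNReal.sqrt (Fintype.card ι) := by
  let ℓ : EuclideanSpace ℝ ι → ℝ := centeredSqLinearForm μ fun j ↦ C k j + C j k
  have hcoeff (j : ι) : ‖C k j + C j k‖ₑ ≤ (2 * B : ℝ≥0) := by
    rw [two_mul, ENNReal.coe_add]
    exact (enorm_add_le _ _).trans (add_le_add (hC k j) (hC j k))
  have hℓ : eLpNorm ℓ (2 * q) μ ≤ gaussianPoincareConst σ (2 * q)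
      * (NNReal.sqrt (Fintype.card ι) * (2 * (2 * B : ℝ≥0) * (σ * gaussianLpNorm (2 * q)))) :=
    eLpNorm_centeredSqLinearForm_le hμ hσ (hq₂.trans (le_mul_of_one_le_left' one_le_two))
      (by finiteness) hcoeff
  have hmeas : AEStronglyMeasurable ℓ μ := (integrable_centeredSqLinearForm _).1
  simp only [gradient_centeredSqQuadraticForm_apply]
  calc eLpNorm (fun x ↦ 2 * (x k * ℓ x)) q μ
      = ‖(2 : ℝ)‖ₑ * eLpNorm (fun x ↦ x k * ℓ x) q μ := eLpNorm_const_smul (2 : ℝ) _ q μ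
    _ ≤ 2 * (eLpNorm (fun x ↦ x k) (2 * q) μ * eLpNorm ℓ (2 * q) μ) := by
        rw [Real.enorm_of_nonneg zero_le_two, ENNReal.ofReal_ofNat]
        gcongr
        exact eLpNorm_mul_le_eLpNorm_two_mul (by fun_prop) hmeas
    _ ≤ 2 * (σ * gaussianLpNorm (2 * q) * (gaussianPoincareConst σ (2 * q)
          * (NNReal.sqrt (Fintype.card ι)
            * (2 * (2 * B : ℝ≥0) * (σ * gaussianLpNorm (2 * q)))))) := by
        gcongr
        exact eLpNorm_apply_le hμ hσ k
    _ = _ := by push_cast; ring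

/-- The constant in the `L^q` bound, linear in the dimension, for a quadratic form in the centered
squared coordinates whose coefficients are bounded by `B`, under a centered Gaussian measure whose
covariance form is bounded by `σ ^ 2`. -/
def centeredSqQuadraticFormConst (σ B : ℝ≥0) (q : ℝ≥0∞) : ℝ≥0∞ :=
  gaussianPoincareConst σ q
    * (gaussianPoincareConst σ (2 * q) * (8 * B * (σ * gaussianLpNorm (2 * q)) ^ 2))

theorem centeredSqQuadraticFormConst_ne_top (σ B : ℝ≥0) (hq : q ≠ ∞) :
    centeredSqQuadraticFormConst σ B q ≠ ∞ := by
  have h2q : 2 * q ≠ ∞ := by finiteness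
  have h₁ := gaussianPoincareConst_ne_top σ hq
  have h₂ := gaussianPoincareConst_ne_top σ h2q
  have h₃ := gaussianLpNorm_ne_top h2q
  unfold centeredSqQuadraticFormConst
  finiteness

theorem eLpNorm_centeredSqQuadraticForm_sub_integral_le
    (hμ : ∀ L : StrongDual ℝ (EuclideanSpace ℝ ι), ∫ x, L x ∂μ = 0)
    (hσ : ∀ L : StrongDual ℝ (EuclideanSpace ℝ ι), Var[L; μ] ≤ (σ * ‖L‖) ^ 2) (hq₂ : 2 ≤ q)
    (hq : q ≠ ∞) {B : ℝ≥0} {C : Matrix ι ι ℝ} (hC : ∀ i j, ‖C i j‖ₑ ≤ B) :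
    eLpNorm (fun x ↦ centeredSqQuadraticForm μ C x - ∫ y, centeredSqQuadraticForm μ C y ∂μ) q μ
      ≤ centeredSqQuadraticFormConst σ B q * Fintype.card ι := by
  refine (eLpNorm_sub_integral_le_of_eLpNorm_gradient_apply_le hμ hσ hq₂ hq
    (contDiff_centeredSqQuadraticForm μ C) (integrable_centeredSqQuadraticForm C)
    (eLpNorm_gradient_centeredSqQuadraticForm_apply_le hμ hσ hq₂ hq hC)).trans_eq ?_
  have hsqrt : ((NNReal.sqrt (Fintype.card ι) : ℝ≥0) : ℝ≥0∞) * NNReal.sqrt (Fintype.card ι)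
      = Fintype.card ι := by
    rw [← ENNReal.coe_mul, NNReal.mul_self_sqrt, ENNReal.coe_natCast]
  rw [← hsqrt, centeredSqQuadraticFormConst]
  ring

end EuclideanSpace

section GaussianVector

variable {Ω : Type*} [MeasureSpace Ω] {p : ℕ} {Z : Ω → Fin p → ℝ}
  {S : Matrix (Fin p) (Fin p) ℝ}

/-- The law of the random vector `Z`, as a measure on Euclidean space rather than on `Fin p → ℝ`, so
that the bound on its covariance matrix is a bound in the Euclidean operator norm. -/
def euclideanLaw (Z : Ω → Fin p → ℝ) : Measure (EuclideanSpace ℝ (Fin p)) :=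
  (ℙ : Measure Ω).map fun ω ↦ WithLp.toLp 2 (Z ω)

theorem strongDual_apply_eq_sum (L : StrongDual ℝ (EuclideanSpace ℝ (Fin p)))
    (x : EuclideanSpace ℝ (Fin p)) :
    L x = ∑ i, (InnerProductSpace.toDual ℝ _).symm L i * x i := by
  rw [← InnerProductSpace.toDual_symm_apply, PiLp.inner_apply]
  exact sum_congr rfl fun i _ ↦ mul_comm _ _

theorem toDual_symm_proj (i : Fin p) :
    (InnerProductSpace.toDual ℝ (EuclideanSpace ℝ (Fin p))).symm (EuclideanSpace.proj i)
      = EuclideanSpace.single i 1 := by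
  rw [LinearIsometryEquiv.symm_apply_eq]
  ext x
  simp [EuclideanSpace.inner_single_left]

namespace IsGaussianVec

theorem aemeasurable (hZ : IsGaussianVec Z S) : AEMeasurable Z ℙ := by
  refine aemeasurable_pi_iff.mpr fun i ↦ AEMeasurable.of_map_ne_zero ?_
  have h := hZ (Pi.single i 1)
  simp only [Pi.single_apply, ite_mul, one_mul, zero_mul, sum_ite_eq', mem_univ, if_true] at h
  rw [h]
  exact NeZero.ne _

theorem aemeasurable_toLp (hZ : IsGaussianVec Z S) :
    AEMeasurable (fun ω ↦ WithLp.toLp 2 (Z ω)) ℙ :=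
  (WithLp.measurable_toLp 2 _).comp_aemeasurable hZ.aemeasurable

theorem map_strongDual_euclideanLaw (hZ : IsGaussianVec Z S)
    (L : StrongDual ℝ (EuclideanSpace ℝ (Fin p))) :
    (euclideanLaw Z).map L
      = gaussianReal 0 (∑ i, ∑ j, (InnerProductSpace.toDual ℝ _).symm L i * S i j *
          (InnerProductSpace.toDual ℝ _).symm L j).toNNReal := by
  rw [← hZ, euclideanLaw, AEMeasurable.map_map_of_aemeasurable (by fun_prop) hZ.aemeasurable_toLp]
  congr 1 with ω
  exact strongDual_apply_eq_sum L _

theorem isGaussian_euclideanLaw (hZ : IsGaussianVec Z S) : IsGaussian (euclideanLaw Z) :=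
  isGaussian_of_map_eq_gaussianReal fun L ↦ ⟨_, _, hZ.map_strongDual_euclideanLaw L⟩

theorem integral_strongDual_euclideanLaw (hZ : IsGaussianVec Z S)
    (L : StrongDual ℝ (EuclideanSpace ℝ (Fin p))) : ∫ x, L x ∂euclideanLaw Z = 0 := by
  rw [← integral_map (φ := L) (f := fun y ↦ y) (by fun_prop) (by fun_prop),
    hZ.map_strongDual_euclideanLaw, integral_id_gaussianReal]

theorem variance_strongDual_euclideanLaw (hZ : IsGaussianVec Z S)
    (hS : ∀ v : Fin p → ℝ, 0 ≤ ∑ i, ∑ j, v i * S i j * v j)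
    (L : StrongDual ℝ (EuclideanSpace ℝ (Fin p))) :
    Var[L; euclideanLaw Z] = ∑ i, ∑ j, (InnerProductSpace.toDual ℝ _).symm L i * S i j *
          (InnerProductSpace.toDual ℝ _).symm L j := by
  rw [← variance_id_map (by fun_prop), hZ.map_strongDual_euclideanLaw, variance_id_gaussianReal,
    Real.coe_toNNReal _ (hS _)]

theorem variance_strongDual_euclideanLaw_le (hZ : IsGaussianVec Z S)
    (hS : ∀ v : Fin p → ℝ, 0 ≤ ∑ i, ∑ j, v i * S i j * v j) {M₀ : ℝ≥0}
    (hS' : ∀ v : Fin p → ℝ, ∑ i, ∑ j, v i * S i j * v j ≤ M₀ * ∑ i, v i ^ 2)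
    (L : StrongDual ℝ (EuclideanSpace ℝ (Fin p))) :
    Var[L; euclideanLaw Z] ≤ (NNReal.sqrt M₀ * ‖L‖) ^ 2 := by
  rw [hZ.variance_strongDual_euclideanLaw hS, mul_pow, ← NNReal.coe_pow, NNReal.sq_sqrt,
    ← (InnerProductSpace.toDual ℝ (EuclideanSpace ℝ (Fin p))).symm.norm_map L,
    EuclideanSpace.real_norm_sq_eq]
  exact hS' _

theorem covariance_apply_euclideanLaw (hZ : IsGaussianVec Z S) (hsymm : S.IsSymm)
    (hS : ∀ v : Fin p → ℝ, 0 ≤ ∑ i, ∑ j, v i * S i j * v j) (i j : Fin p) :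
    cov[fun x ↦ x i, fun x ↦ x j; euclideanLaw Z] = S i j := by
  have := hZ.isGaussian_euclideanLaw
  let π (k : Fin p) : StrongDual ℝ (EuclideanSpace ℝ (Fin p)) := EuclideanSpace.proj k
  have hπ (k l : Fin p) : (InnerProductSpace.toDual ℝ _).symm (π k) l = if l = k then 1 else 0 := by
    rw [toDual_symm_proj, PiLp.single_apply]
  have hmem (k : Fin p) : MemLp (π k) 2 (euclideanLaw Z) :=
    IsGaussian.memLp_dual _ _ 2 (by simp)
  have hvar (k : Fin p) : Var[π k; euclideanLaw Z] = S k k := by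
    rw [hZ.variance_strongDual_euclideanLaw hS]
    simp [hπ]
  have hvar_add : Var[π i + π j; euclideanLaw Z] = S i i + S i j + S j i + S j j := by
    rw [hZ.variance_strongDual_euclideanLaw hS]
    simp only [map_add, PiLp.add_apply, hπ, add_mul, ite_mul, one_mul, zero_mul, mul_add, mul_ite,
      mul_one, mul_zero, sum_add_distrib, sum_ite_eq', mem_univ, if_true]
    ring
  rw [FunLike.coe_add, variance_add (hmem i) (hmem j), hvar, hvar, hsymm.apply i j] at hvar_add
  change cov[π i, π j; euclideanLaw Z] = S i j
  linarith

theorem integral_sq_apply_euclideanLaw (hZ : IsGaussianVec Z S) (hsymm : S.IsSymm)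
    (hS : ∀ v : Fin p → ℝ, 0 ≤ ∑ i, ∑ j, v i * S i j * v j) (i : Fin p) :
    ∫ x, x i ^ 2 ∂euclideanLaw Z = S i i := by
  have := hZ.isGaussian_euclideanLaw
  have hmem : MemLp (fun x ↦ x i) 2 (euclideanLaw Z) :=
    IsGaussian.memLp_dual _ (EuclideanSpace.proj (𝕜 := ℝ) i) 2 (by simp)
  have hmean : ∫ x, x i ∂euclideanLaw Z = 0 :=
    hZ.integral_strongDual_euclideanLaw (EuclideanSpace.proj (𝕜 := ℝ) i)
  rw [← hZ.covariance_apply_euclideanLaw hsymm hS, covariance_eq_sub hmem hmem, hmean]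
  simp only [Pi.mul_apply, mul_zero, sub_zero, sq]

theorem centeredSqQuadraticForm_euclideanLaw_sub_integral (hZ : IsGaussianVec Z S)
    (hsymm : S.IsSymm) (hS : ∀ v : Fin p → ℝ, 0 ≤ ∑ i, ∑ j, v i * S i j * v j)
    (C : Matrix (Fin p) (Fin p) ℝ) (x : EuclideanSpace ℝ (Fin p)) :
    centeredSqQuadraticForm (euclideanLaw Z) C x
        - ∫ y, centeredSqQuadraticForm (euclideanLaw Z) C y ∂euclideanLaw Z
      = ∑ i, ∑ j, C i j * ((x i ^ 2 - S i i) * (x j ^ 2 - S j j) - 2 * S i j ^ 2) := by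
  have := hZ.isGaussian_euclideanLaw
  rw [integral_centeredSqQuadraticForm hZ.integral_strongDual_euclideanLaw]
  simp only [centeredSqQuadraticForm, centeredSq, hZ.covariance_apply_euclideanLaw hsymm hS,
    hZ.integral_sq_apply_euclideanLaw hsymm hS, mul_sub, sum_sub_distrib]

end IsGaussianVec

end GaussianVector

theorem stmt17_general (M₀ B : ℝ) {K₀ : ℕ} (hK : 2 ≤ K₀) :
    ∃ C : ℝ, 0 < C ∧
      ∀ (p : ℕ) (S : Matrix (Fin p) (Fin p) ℝ), S.IsSymm →
        (∀ v : Fin p → ℝ, 0 ≤ ∑ i, ∑ j, v i * S i j * v j) →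
        (∀ v : Fin p → ℝ, ∑ i, ∑ j, v i * S i j * v j ≤ M₀ * ∑ i, v i ^ 2) →
      ∀ (Cbar : Matrix (Fin p) (Fin p) ℝ), (∀ i j, |Cbar i j| ≤ B) →
      ∀ (Ω : Type*) (_ : MeasureSpace Ω) (Z : Ω → Fin p → ℝ), IsGaussianVec Z S →
      (∫ ω, |∑ i : Fin p, ∑ j : Fin p,
            Cbar i j * ((Z ω i ^ 2 - S i i) * (Z ω j ^ 2 - S j j)
              - 2 * S i j ^ 2)| ^ K₀ ∂ℙ)
        ≤ C * (p : ℝ) ^ K₀ := by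
  let σ : ℝ≥0 := NNReal.sqrt M₀.toNNReal
  let c : ℝ≥0∞ := centeredSqQuadraticFormConst σ B.toNNReal K₀
  have hc : c ≠ ∞ := centeredSqQuadraticFormConst_ne_top _ _ (ENNReal.natCast_ne_top K₀)
  refine ⟨c.toReal ^ K₀ + 1, by positivity, fun p S hsymm hS hM₀ Cbar hB Ω _ Z hZ ↦ ?_⟩
  have := hZ.isGaussian_euclideanLaw
  let Q : EuclideanSpace ℝ (Fin p) → ℝ := centeredSqQuadraticForm (euclideanLaw Z) Cbar
  let f : EuclideanSpace ℝ (Fin p) → ℝ := fun x ↦ Q x - ∫ y, Q y ∂euclideanLaw Z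
  have hf : AEStronglyMeasurable f (euclideanLaw Z) :=
    (integrable_centeredSqQuadraticForm Cbar).aestronglyMeasurable.sub
      aestronglyMeasurable_const
  have hnorm : eLpNorm f K₀ (euclideanLaw Z) ≤ c * (p : ℝ≥0∞) := by
    have hM₀' (v : Fin p → ℝ) : ∑ i, ∑ j, v i * S i j * v j ≤ M₀.toNNReal * ∑ i, v i ^ 2 :=
      (hM₀ v).trans (by gcongr; exact Real.le_coe_toNNReal M₀)
    have hB' (i j : Fin p) : ‖Cbar i j‖ₑ ≤ B.toNNReal := by
      rw [← ofReal_norm]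
      exact ENNReal.ofReal_le_ofReal (hB i j)
    simpa only [Fintype.card_fin] using eLpNorm_centeredSqQuadraticForm_sub_integral_le
      hZ.integral_strongDual_euclideanLaw (hZ.variance_strongDual_euclideanLaw_le hS hM₀')
      (by exact_mod_cast hK) (ENNReal.natCast_ne_top K₀) hB'
  calc _ = ∫ ω, |f (WithLp.toLp 2 (Z ω))| ^ K₀ ∂ℙ := by
        simp only [f, Q, hZ.centeredSqQuadraticForm_euclideanLaw_sub_integral hsymm hS]
    _ = ∫ x, |f x| ^ K₀ ∂euclideanLaw Z :=
        (integral_map hZ.aemeasurable_toLp (hf.norm.pow K₀)).symm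
    _ ≤ (c * (p : ℝ≥0∞)).toReal ^ K₀ :=
        integral_abs_pow_le_of_eLpNorm_le (by lia) hf (by finiteness) hnorm
    _ ≤ (c.toReal ^ K₀ + 1) * (p : ℝ) ^ K₀ := by
        rw [ENNReal.toReal_mul, ENNReal.toReal_natCast, mul_pow]
        gcongr
        exact (lt_add_one _).le

/-- For `Z ∼ N_p(0,Σ)` with `Σ ∈ 𝓕_α` and `|C̄_ij| ≤ 2`, the centered variable
`g = ∑_{i,j} C̄_ij ((z_i²−σ_ii)(z_j²−σ_jj) − 2σ_ij²)` satisfies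
`𝔼 g^{K₀} ≤ C p^{K₀}` for any even `K₀ ≥ 2`. -/
theorem stmt17 (M M₀ α : ℝ) (hM : 0 < M) (hM₀ : 0 < M₀) (hα : 0 < α)
    (K₀ : ℕ) (hK : 2 ≤ K₀) (hKeven : Even K₀) :
    ∃ C : ℝ, 0 < C ∧
      ∀ (p τ : ℕ), 1 ≤ τ → τ ≤ p →
      ∀ (S : Matrix (Fin p) (Fin p) ℝ), S.IsSymm →
        (∀ v : Fin p → ℝ, 0 ≤ ∑ i, ∑ j, v i * S i j * v j) →
        (∀ v : Fin p → ℝ, ∑ i, ∑ j, v i * S i j * v j ≤ M₀ * ∑ i, v i ^ 2) →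
        (∀ k : ℕ, 1 ≤ k → ∀ j : Fin p,
            ∑ i ∈ Finset.univ.filter
                (fun i : Fin p => k < ((i : ℤ) - (j : ℤ)).natAbs),
              |S i j| ≤ M * (k : ℝ) ^ (-α)) →
      ∀ (Cbar : Matrix (Fin p) (Fin p) ℝ), (∀ i j, |Cbar i j| ≤ 2) →
      ∀ (Ω : Type) (_ : MeasureSpace Ω)
        (_ : IsProbabilityMeasure (ℙ : Measure Ω))
        (Z : Ω → Fin p → ℝ), Measurable Z → IsGaussianVec Z S →
      (∫ ω, (∑ i : Fin p, ∑ j : Fin p,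
            Cbar i j * ((Z ω i ^ 2 - S i i) * (Z ω j ^ 2 - S j j)
              - 2 * S i j ^ 2)) ^ K₀ ∂ℙ)
        ≤ C * (p : ℝ) ^ K₀ := by
  obtain ⟨C, hC, hbound⟩ := stmt17_general M₀ 2 hK
  refine ⟨C, hC, fun p _ _ _ S hsymm hS hM₀ _ Cbar hCbar Ω _ _ Z _ hZ ↦ ?_⟩
  simpa only [hKeven.pow_abs] using hbound p S hsymm hS hM₀ Cbar hCbar Ω _ Z hZ
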